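/- Let α ∈ (0,2) and let f, g ∈ L^α(S, μ) be nonzero and satisfy Assumption (A1) with constant ε₁. Then ∫_ℝ ∫_ℝ |U(u,v)| du dv ≤ C [f,g]₂, where the constant C depends only on ε₁, α, ‖f‖_α and ‖g‖_α. (Paper's Lemma 3.4.) -/

import Mathlib

open MeasureTheory Real Set Filter
open scoped ENNReal Topology

noncomputable def nrm (α : ℝ) {S : Type*} [MeasurableSpace S] (μ : Measure S) (f : S → ℝ) : ℝ :=
  (∫ s, |f s| ^ α ∂μ) ^ (1 / α)

noncomputable def dep2 (α : ℝ) {S : Type*} [MeasurableSpace S] (μ : Measure S) (f g : S → ℝ) : ℝ :=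
  ∫ s, |f s * g s| ^ (α / 2) ∂μ

noncomputable def dep1s (α : ℝ) {S : Type*} [MeasurableSpace S] (μ : Measure S) (f g : S → ℝ) : ℝ :=
  ∫ s, |f s| ^ (α - 1) * |g s| ∂μ

noncomputable def dep1 (α : ℝ) {S : Type*} [MeasurableSpace S] (μ : Measure S) (f g : S → ℝ) : ℝ :=
  dep1s α μ f g + dep1s α μ g f

/-- `f ∈ L^α(S, μ)`. -/
def MemLalpha (α : ℝ) {S : Type*} [MeasurableSpace S] (μ : Measure S) (f : S → ℝ) : Prop :=
  AEStronglyMeasurable f μ ∧ Integrable (fun s => |f s| ^ α) μ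

/-- Assumption (A1) with constant ε₁. -/
def A1 (α ε₁ : ℝ) {S : Type*} [MeasurableSpace S] (μ : Measure S) (f g : S → ℝ) : Prop :=
  nrm α μ f ^ (α / 2) * nrm α μ g ^ (α / 2) - dep2 α μ f g
    ≥ ε₁ * (nrm α μ f ^ (α / 2) * nrm α μ g ^ (α / 2))

/-- Assumption (A2) with constant ε₂. -/
def A2 (α ε₂ : ℝ) {S : Type*} [MeasurableSpace S] (μ : Measure S) (f g : S → ℝ) : Prop :=
  ∀ u v : ℝ, nrm α μ (fun s => u * f s + v * g s) ^ α
    ≥ ε₂ * (|u| ^ α * nrm α μ f ^ α + |v| ^ α * nrm α μ g ^ α)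

noncomputable def Ufun (α : ℝ) {S : Type*} [MeasurableSpace S] (μ : Measure S)
    (f g : S → ℝ) (u v : ℝ) : ℝ :=
  Real.exp (-(nrm α μ (fun s => u * f s + v * g s) ^ α)) -
    Real.exp (-(nrm α μ (fun s => u * f s) ^ α) - nrm α μ (fun s => v * g s) ^ α)

/-- signed power `a^⟨p⟩ = sign(a)|a|^p`. -/
noncomputable def spow (a p : ℝ) : ℝ := Real.sign a * |a| ^ p

noncomputable def D1 (α : ℝ) {S : Type*} [MeasurableSpace S] (μ : Measure S)
    (f g : S → ℝ) (u v : ℝ) : ℝ :=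
  -α * (∫ s, spow (u * f s + v * g s) (α - 1) * f s ∂μ) *
      Real.exp (-(nrm α μ (fun s => u * f s + v * g s) ^ α)) +
    α * (∫ s, spow (u * f s) (α - 1) * f s ∂μ) *
      Real.exp (-(nrm α μ (fun s => u * f s) ^ α) - nrm α μ (fun s => v * g s) ^ α)

noncomputable def D2 (α : ℝ) {S : Type*} [MeasurableSpace S] (μ : Measure S)
    (f g : S → ℝ) (u v : ℝ) : ℝ :=
  -(α * (α - 1)) * (∫ s, (if f s = 0 ∨ g s = 0 then (0:ℝ) else
        |u * f s + v * g s| ^ (α - 2) * (f s * g s)) ∂μ) *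
      Real.exp (-(nrm α μ (fun s => u * f s + v * g s) ^ α)) +
    α ^ 2 * (∫ s, spow (u * f s + v * g s) (α - 1) * f s ∂μ) *
      (∫ s, spow (u * f s + v * g s) (α - 1) * g s ∂μ) *
      Real.exp (-(nrm α μ (fun s => u * f s + v * g s) ^ α)) -
    α ^ 2 * (∫ s, spow (u * f s) (α - 1) * f s ∂μ) *
      (∫ s, spow (v * g s) (α - 1) * g s ∂μ) *
      Real.exp (-(nrm α μ (fun s => u * f s) ^ α) - nrm α μ (fun s => v * g s) ^ α)

/-- `(ξ, η)` is jointly SαS with spectral pair `(f, g)`. -/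
def JointSAS (α : ℝ) {S : Type*} [MeasurableSpace S] (μ : Measure S) (f g : S → ℝ)
    {Ω : Type*} [MeasurableSpace Ω] (P : Measure Ω) (ξ η : Ω → ℝ) : Prop :=
  ∀ u v : ℝ, (∫ ω, Complex.exp (Complex.I * ((u * ξ ω + v * η ω : ℝ) : ℂ)) ∂P)
    = Complex.exp (-((nrm α μ (fun s => u * f s + v * g s) ^ α : ℝ) : ℂ))

/-!
From `|√a - √b| ≤ √c ≤ √a + √b` one gets `|c - a - b| ≤ 2 √(a b)`. Since `t ↦ t ^ (α / 2)` is
subadditive, this applies to `c = |x + y| ^ α`, `a = |x| ^ α`, `b = |y| ^ α`; integrated over `S`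
it says that the exponents of the two terms of `U(u, v)` differ by at most
`2 |u| ^ (α / 2) |v| ^ (α / 2) [f, g]₂`. The same inequality combined with (A1) yields (A2), which
bounds both exponents below by `ε (|u| ^ α ‖f‖ ^ α + |v| ^ α ‖g‖ ^ α)`. As `exp` is Lipschitz on
half-lines, `|U(u, v)|` is then at most `2 [f, g]₂` times a product of a function of `u` and a
function of `v`, whose integrals are values of the Gamma function.
-/

section Real

lemma abs_sq_sub_sq_sub_sq_le {a b c : ℝ} (ha : 0 ≤ a) (hb : 0 ≤ b) (hc : c ≤ a + b)
    (habc : |a - b| ≤ c) : |c ^ 2 - a ^ 2 - b ^ 2| ≤ 2 * (a * b) := by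
  have upper : c ^ 2 ≤ (a + b) ^ 2 := pow_le_pow_left₀ ((abs_nonneg _).trans habc) hc 2
  have lower : (a - b) ^ 2 ≤ c ^ 2 := sq_le_sq' (neg_le_of_abs_le habc) (le_of_abs_le habc)
  rw [abs_le]
  constructor <;> nlinarith only [upper, lower, ha, hb]

lemma rpow_half_sq {x : ℝ} (hx : 0 ≤ x) (p : ℝ) : (x ^ (p / 2)) ^ 2 = x ^ p := by
  rw [← rpow_mul_natCast hx, Nat.cast_ofNat, div_mul_cancel₀ p two_ne_zero]

lemma abs_exp_sub_exp_le {x y m : ℝ} (hx : x ≤ m) (hy : y ≤ m) :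
    |exp x - exp y| ≤ exp m * |x - y| :=
  (convex_Iic m).norm_image_sub_le_of_norm_deriv_le (fun _ _ ↦ differentiableAt_exp)
    (fun z hz ↦ by simpa only [Real.deriv_exp, norm_eq_abs, abs_exp, exp_le_exp] using mem_Iic.1 hz)
    hy hx

lemma integral_abs_rpow_mul_exp_neg_mul_abs_rpow {p q b : ℝ} (hp : 0 < p) (hq : -1 < q)
    (hb : 0 < b) :
    ∫ x : ℝ, |x| ^ q * exp (-b * |x| ^ p) =
      2 * (b ^ (-(q + 1) / p) * (1 / p) * Gamma ((q + 1) / p)) := by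
  rw [integral_comp_abs (f := fun x ↦ x ^ q * exp (-b * x ^ p)),
    integral_rpow_mul_exp_neg_mul_rpow hp hq hb]

lemma lintegral_abs_rpow_mul_exp_neg_mul_abs_rpow {p q b : ℝ} (hp : 0 < p) (hq : -1 < q)
    (hb : 0 < b) :
    ∫⁻ x : ℝ, ENNReal.ofReal (|x| ^ q * exp (-b * |x| ^ p)) =
      ENNReal.ofReal (2 * (b ^ (-(q + 1) / p) * (1 / p) * Gamma ((q + 1) / p))) := by
  have value := integral_abs_rpow_mul_exp_neg_mul_abs_rpow hp hq hb
  have value_pos : 0 < 2 * (b ^ (-(q + 1) / p) * (1 / p) * Gamma ((q + 1) / p)) := by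
    have : 0 < Gamma ((q + 1) / p) := Gamma_pos_of_pos (div_pos (by linarith) hp)
    positivity
  -- Bochner integrals of nonintegrable functions vanish, so the nonzero value gives integrability.
  have integrable : Integrable fun x : ℝ ↦ |x| ^ q * exp (-b * |x| ^ p) :=
    .of_integral_ne_zero (value ▸ value_pos.ne')
  rw [← ofReal_integral_eq_lintegral_ofReal integrable (.of_forall fun x ↦ by positivity), value]

lemma lintegral_abs_rpow_half_mul_exp_neg_mul_abs_rpow {p b : ℝ} (hp : 0 < p) (hb : 0 < b) :
    ∫⁻ x : ℝ, ENNReal.ofReal (|x| ^ (p / 2) * exp (-b * |x| ^ p)) =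
      ENNReal.ofReal (2 / p * Gamma (1 / 2 + 1 / p) * b ^ (-(1 / 2 + 1 / p))) := by
  have hexp : (p / 2 + 1) / p = 1 / 2 + 1 / p := by field_simp
  rw [lintegral_abs_rpow_mul_exp_neg_mul_abs_rpow hp (by linarith only [hp]) hb, neg_div, hexp]
  congr 1
  ring

end Real

section Norm

variable {E : Type*} [SeminormedAddCommGroup E] {p : ℝ}

lemma norm_add_rpow_le (hp0 : 0 ≤ p) (hp1 : p ≤ 1) (x y : E) :
    ‖x + y‖ ^ p ≤ ‖x‖ ^ p + ‖y‖ ^ p :=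
  (rpow_le_rpow (norm_nonneg _) (norm_add_le x y) hp0).trans
    (rpow_add_le_add_rpow (norm_nonneg x) (norm_nonneg y) hp0 hp1)

lemma abs_norm_rpow_sub_norm_rpow_le (hp0 : 0 ≤ p) (hp1 : p ≤ 1) (x y : E) :
    |‖x‖ ^ p - ‖y‖ ^ p| ≤ ‖x + y‖ ^ p := by
  have hx := norm_add_rpow_le hp0 hp1 (x + y) (-y)
  have hy := norm_add_rpow_le hp0 hp1 (x + y) (-x)
  rw [norm_neg, add_neg_cancel_right] at hx
  rw [norm_neg, add_neg_cancel_comm] at hy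
  rw [abs_le]
  constructor <;> linarith only [hx, hy]

lemma abs_norm_add_rpow_sub_sub_le (hp0 : 0 ≤ p) (hp2 : p ≤ 2) (x y : E) :
    |‖x + y‖ ^ p - ‖x‖ ^ p - ‖y‖ ^ p| ≤ 2 * (‖x‖ * ‖y‖) ^ (p / 2) := by
  have half_nonneg : 0 ≤ p / 2 := by linarith only [hp0]
  have half_le_one : p / 2 ≤ 1 := by linarith only [hp2]
  rw [mul_rpow (norm_nonneg x) (norm_nonneg y), ← rpow_half_sq (norm_nonneg (x + y)) p,
    ← rpow_half_sq (norm_nonneg x) p, ← rpow_half_sq (norm_nonneg y) p]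
  exact abs_sq_sub_sq_sub_sq_le (by positivity) (by positivity)
    (norm_add_rpow_le half_nonneg half_le_one x y)
    (abs_norm_rpow_sub_norm_rpow_le half_nonneg half_le_one x y)

end Norm

section Lalpha

variable {α ε : ℝ} {S : Type*} [MeasurableSpace S] {μ : Measure S} {f g : S → ℝ}

lemma nrm_nonneg : 0 ≤ nrm α μ f :=
  rpow_nonneg (integral_nonneg fun _ ↦ by positivity) _

lemma dep2_nonneg : 0 ≤ dep2 α μ f g :=
  integral_nonneg fun _ ↦ by positivity

lemma nrm_rpow (hα : α ≠ 0) : nrm α μ f ^ α = ∫ s, |f s| ^ α ∂μ := by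
  rw [nrm, ← rpow_mul (integral_nonneg fun _ ↦ by positivity), one_div_mul_cancel hα, rpow_one]

lemma nrm_const_mul_rpow (hα : α ≠ 0) (u : ℝ) :
    nrm α μ (fun s ↦ u * f s) ^ α = |u| ^ α * nrm α μ f ^ α := by
  simp_rw [nrm_rpow hα, abs_mul, mul_rpow (abs_nonneg _) (abs_nonneg _), integral_const_mul]

lemma dep2_const_mul (u v : ℝ) :
    dep2 α μ (fun s ↦ u * f s) (fun s ↦ v * g s) =
      |u| ^ (α / 2) * |v| ^ (α / 2) * dep2 α μ f g := by
  simp_rw [dep2, mul_mul_mul_comm u _ v, abs_mul (u * v), abs_mul u v,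
    mul_rpow (mul_nonneg (abs_nonneg u) (abs_nonneg v)) (abs_nonneg _),
    mul_rpow (abs_nonneg u) (abs_nonneg v), integral_const_mul]

namespace MemLalpha

lemma const_mul (hf : MemLalpha α μ f) (u : ℝ) : MemLalpha α μ fun s ↦ u * f s := by
  refine ⟨hf.1.const_mul u, ?_⟩
  simpa only [abs_mul, mul_rpow (abs_nonneg _) (abs_nonneg _)] using hf.2.const_mul (|u| ^ α)

lemma integrable_abs_mul_rpow_half (hf : MemLalpha α μ f) (hg : MemLalpha α μ g) :
    Integrable (fun s ↦ |f s * g s| ^ (α / 2)) μ := by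
  refine (hf.2.add hg.2).mono' ?_ (.of_forall fun s ↦ ?_)
  · exact ((hf.1.mul hg.1).aemeasurable.abs.pow_const _).aestronglyMeasurable
  · have am_gm := two_mul_le_add_sq (|f s| ^ (α / 2)) (|g s| ^ (α / 2))
    rw [rpow_half_sq (abs_nonneg _), rpow_half_sq (abs_nonneg _)] at am_gm
    rw [norm_of_nonneg (by positivity), abs_mul, mul_rpow (abs_nonneg _) (abs_nonneg _),
      Pi.add_apply]
    have : 0 ≤ |f s| ^ (α / 2) * |g s| ^ (α / 2) := by positivity
    linarith only [am_gm, this]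

lemma add (hα0 : 0 ≤ α) (hα2 : α ≤ 2) (hf : MemLalpha α μ f) (hg : MemLalpha α μ g) :
    MemLalpha α μ fun s ↦ f s + g s := by
  refine ⟨hf.1.add hg.1, ((hf.2.add hg.2).add
    ((hf.integrable_abs_mul_rpow_half hg).const_mul 2)).mono' ?_ (.of_forall fun s ↦ ?_)⟩
  · exact ((hf.1.add hg.1).aemeasurable.abs.pow_const _).aestronglyMeasurable
  · have pointwise := le_of_abs_le (abs_norm_add_rpow_sub_sub_le hα0 hα2 (f s) (g s))
    simp only [norm_eq_abs, ← abs_mul] at pointwise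
    rw [norm_of_nonneg (by positivity)]
    simp only [Pi.add_apply]
    linarith only [pointwise]

lemma abs_nrm_add_rpow_sub_sub_le (hα0 : 0 < α) (hα2 : α ≤ 2) (hf : MemLalpha α μ f)
    (hg : MemLalpha α μ g) :
    |nrm α μ (fun s ↦ f s + g s) ^ α - nrm α μ f ^ α - nrm α μ g ^ α| ≤ 2 * dep2 α μ f g := by
  have hfg := hf.add hα0.le hα2 hg
  calc |nrm α μ (fun s ↦ f s + g s) ^ α - nrm α μ f ^ α - nrm α μ g ^ α|
      = |∫ s, (|f s + g s| ^ α - |f s| ^ α - |g s| ^ α) ∂μ| := by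
        rw [nrm_rpow hα0.ne', nrm_rpow hα0.ne', nrm_rpow hα0.ne', ← integral_sub hfg.2 hf.2,
          ← integral_sub (hfg.2.sub' hf.2) hg.2]
    _ ≤ ∫ s, |(|f s + g s| ^ α - |f s| ^ α - |g s| ^ α)| ∂μ := abs_integral_le_integral_abs
    _ ≤ ∫ s, 2 * |f s * g s| ^ (α / 2) ∂μ := by
        refine integral_mono ((hfg.2.sub hf.2).sub hg.2).abs
          ((hf.integrable_abs_mul_rpow_half hg).const_mul 2) fun s ↦ ?_
        simpa only [norm_eq_abs, ← abs_mul] using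
          abs_norm_add_rpow_sub_sub_le hα0.le hα2 (f s) (g s)
    _ = 2 * dep2 α μ f g := integral_const_mul _ _

lemma abs_nrm_mul_add_mul_rpow_sub_sub_le (hα0 : 0 < α) (hα2 : α ≤ 2) (hf : MemLalpha α μ f)
    (hg : MemLalpha α μ g) (u v : ℝ) :
    |nrm α μ (fun s ↦ u * f s + v * g s) ^ α - |u| ^ α * nrm α μ f ^ α -
        |v| ^ α * nrm α μ g ^ α| ≤ 2 * (|u| ^ (α / 2) * |v| ^ (α / 2) * dep2 α μ f g) := by
  rw [← nrm_const_mul_rpow hα0.ne', ← nrm_const_mul_rpow hα0.ne', ← dep2_const_mul]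
  exact (hf.const_mul u).abs_nrm_add_rpow_sub_sub_le hα0 hα2 (hg.const_mul v)

end MemLalpha

lemma A1.le_one (h : A1 α ε μ f g) (hf : 0 < nrm α μ f) (hg : 0 < nrm α μ g) : ε ≤ 1 := by
  have hfg : 0 < nrm α μ f ^ (α / 2) * nrm α μ g ^ (α / 2) := by positivity
  have hle : ε * (nrm α μ f ^ (α / 2) * nrm α μ g ^ (α / 2)) ≤
      nrm α μ f ^ (α / 2) * nrm α μ g ^ (α / 2) := h.trans (sub_le_self _ dep2_nonneg)
  exact (mul_le_iff_le_one_left hfg).1 hle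

lemma A1.a2 (h : A1 α ε μ f g) (hα0 : 0 < α) (hα2 : α ≤ 2) (hε : ε ≤ 1) (hf : MemLalpha α μ f)
    (hg : MemLalpha α μ g) : A2 α ε μ f g := by
  intro u v
  have key := neg_le_of_abs_le (hf.abs_nrm_mul_add_mul_rpow_sub_sub_le hα0 hα2 hg u v)
  rw [A1] at h
  rw [← rpow_half_sq (abs_nonneg u) α, ← rpow_half_sq (abs_nonneg v) α,
    ← rpow_half_sq (nrm_nonneg (f := f)) α, ← rpow_half_sq (nrm_nonneg (f := g)) α] at key ⊢
  set a := |u| ^ (α / 2)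
  set b := |v| ^ (α / 2)
  set F := nrm α μ f ^ (α / 2)
  set G := nrm α μ g ^ (α / 2)
  have hd : a * b * dep2 α μ f g ≤ a * b * ((1 - ε) * (F * G)) := by
    gcongr
    linarith only [h]
  have hsq : 0 ≤ (1 - ε) * (a * F - b * G) ^ 2 := mul_nonneg (sub_nonneg.2 hε) (sq_nonneg _)
  linear_combination key + 2 * hd + hsq

lemma A2.le_one (h : A2 α ε μ f g) (hα : α ≠ 0) (hf : 0 < nrm α μ f) : ε ≤ 1 := by
  have hfα : 0 < nrm α μ f ^ α := by positivity
  have hle : ε * nrm α μ f ^ α ≤ nrm α μ f ^ α := by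
    simpa only [one_mul, zero_mul, add_zero, abs_one, abs_zero, one_rpow, zero_rpow hα]
      using h 1 0
  exact (mul_le_iff_le_one_left hfα).1 hle

lemma A2.abs_Ufun_le (h : A2 α ε μ f g) (hα0 : 0 < α) (hα2 : α ≤ 2) (hε : ε ≤ 1)
    (hf : MemLalpha α μ f) (hg : MemLalpha α μ g) (u v : ℝ) :
    |Ufun α μ f g u v| ≤ 2 * dep2 α μ f g *
      ((|u| ^ (α / 2) * exp (-(ε * nrm α μ f ^ α) * |u| ^ α)) *
        (|v| ^ (α / 2) * exp (-(ε * nrm α μ g ^ α) * |v| ^ α))) := by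
  set x := nrm α μ (fun s ↦ u * f s + v * g s) ^ α with hx
  set y := |u| ^ α * nrm α μ f ^ α + |v| ^ α * nrm α μ g ^ α with hy
  have hU : Ufun α μ f g u v = exp (-x) - exp (-y) := by
    rw [Ufun, nrm_const_mul_rpow hα0.ne', nrm_const_mul_rpow hα0.ne', hx, hy, neg_add']
  have hεx : ε * y ≤ x := h u v
  have hεy : ε * y ≤ y := by
    have hf0 : 0 ≤ nrm α μ f := nrm_nonneg
    have hg0 : 0 ≤ nrm α μ g := nrm_nonneg
    exact mul_le_of_le_one_left (by positivity) hε
  have hxy : |x - y| ≤ 2 * (|u| ^ (α / 2) * |v| ^ (α / 2) * dep2 α μ f g) := by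
    rw [hy, ← sub_sub]
    exact hf.abs_nrm_mul_add_mul_rpow_sub_sub_le hα0 hα2 hg u v
  calc |Ufun α μ f g u v|
      ≤ exp (-(ε * y)) * |-x - -y| := by
        rw [hU]
        exact abs_exp_sub_exp_le (neg_le_neg hεx) (neg_le_neg hεy)
    _ = exp (-(ε * y)) * |x - y| := by rw [neg_sub_neg, abs_sub_comm]
    _ ≤ exp (-(ε * y)) * (2 * (|u| ^ (α / 2) * |v| ^ (α / 2) * dep2 α μ f g)) := by gcongr
    _ = _ := by
        have hsplit : -(ε * y) =
            -(ε * nrm α μ f ^ α) * |u| ^ α + -(ε * nrm α μ g ^ α) * |v| ^ α := by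
          rw [hy]
          ring
        rw [hsplit, exp_add]
        ring

theorem stmt9_general (hα0 : 0 < α) (hα2 : α ≤ 2) (hε : 0 < ε) (hf : MemLalpha α μ f)
    (hg : MemLalpha α μ g) (hf0 : 0 < nrm α μ f) (hg0 : 0 < nrm α μ g) (h : A2 α ε μ f g) :
    ∫⁻ u : ℝ, ∫⁻ v : ℝ, ENNReal.ofReal |Ufun α μ f g u v| ≤
      ENNReal.ofReal (2 * (2 / α * Gamma (1 / 2 + 1 / α)) ^ 2 *
        (ε * nrm α μ f ^ α * (ε * nrm α μ g ^ α)) ^ (-(1 / 2 + 1 / α)) * dep2 α μ f g) := by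
  have hd : 0 ≤ 2 * dep2 α μ f g := mul_nonneg zero_le_two dep2_nonneg
  have hfε : 0 < ε * nrm α μ f ^ α := by positivity
  have hgε : 0 < ε * nrm α μ g ^ α := by positivity
  let φ (b x : ℝ) : ℝ := |x| ^ (α / 2) * exp (-b * |x| ^ α)
  have hφ (b : ℝ) : AEMeasurable fun x ↦ ENNReal.ofReal (φ b x) :=
    Measurable.aemeasurable (by fun_prop)
  calc ∫⁻ u : ℝ, ∫⁻ v : ℝ, ENNReal.ofReal |Ufun α μ f g u v|
      ≤ ∫⁻ u : ℝ, ∫⁻ v : ℝ, ENNReal.ofReal (2 * dep2 α μ f g) *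
          ENNReal.ofReal (φ (ε * nrm α μ f ^ α) u) *
            ENNReal.ofReal (φ (ε * nrm α μ g ^ α) v) := by
        refine lintegral_mono fun u ↦ lintegral_mono fun v ↦ ?_
        rw [mul_assoc, ← ENNReal.ofReal_mul (by positivity), ← ENNReal.ofReal_mul hd]
        exact ENNReal.ofReal_le_ofReal
          (h.abs_Ufun_le hα0 hα2 (h.le_one hα0.ne' hf0) hf hg u v)
    _ = ENNReal.ofReal (2 * dep2 α μ f g) *
          (∫⁻ u, ENNReal.ofReal (φ (ε * nrm α μ f ^ α) u)) *
            ∫⁻ v, ENNReal.ofReal (φ (ε * nrm α μ g ^ α) v) := by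
        rw [lintegral_lintegral_mul ((hφ _).const_mul _) (hφ _),
          lintegral_const_mul' _ _ ENNReal.ofReal_ne_top]
    _ = _ := by
        rw [lintegral_abs_rpow_half_mul_exp_neg_mul_abs_rpow hα0 hfε,
          lintegral_abs_rpow_half_mul_exp_neg_mul_abs_rpow hα0 hgε, ← ENNReal.ofReal_mul hd,
          ← ENNReal.ofReal_mul (by positivity), mul_rpow hfε.le hgε.le]
        congr 1
        ring

end Lalpha

/-- Paper's Lemma 3.4. -/
theorem stmt9 (α ε₁ nf ng : ℝ) (hα0 : 0 < α) (hα2 : α < 2) (hε₁ : 0 < ε₁)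
    (hnf : 0 < nf) (hng : 0 < ng) :
    ∃ C > (0:ℝ), ∀ (S : Type) [MeasurableSpace S] (μ : Measure S) [SigmaFinite μ]
      (f g : S → ℝ), MemLalpha α μ f → MemLalpha α μ g →
      nrm α μ f = nf → nrm α μ g = ng → A1 α ε₁ μ f g →
      ∫⁻ u : ℝ, ∫⁻ v : ℝ, ENNReal.ofReal |Ufun α μ f g u v|
        ≤ ENNReal.ofReal (C * dep2 α μ f g) := by
  refine ⟨2 * (2 / α * Gamma (1 / 2 + 1 / α)) ^ 2 *
    (ε₁ * nf ^ α * (ε₁ * ng ^ α)) ^ (-(1 / 2 + 1 / α)), by positivity, ?_⟩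
  rintro S _ μ _ f g hf hg rfl rfl h
  exact stmt9_general hα0 hα2.le hε₁ hf hg hnf hng (h.a2 hα0 hα2.le (h.le_one hnf hng) hf hg)
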